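/- Let U ⊆ ℕ, and let f, g : ℕ → ℕ be total computable functions such that the symmetric difference of range(f) and range(g) is finite. Assume moreover that the four sets range(f) ∩ U, range(f) \ U, range(g) ∩ U, and range(g) \ U are all nonempty. Then f⁻¹(U) ≡ₘ g⁻¹(U). -/

import Mathlib

/-!
The two reductions are symmetric, so consider `f⁻¹(U) ≤ g⁻¹(U)`. If `range f ⊆ range g`, then a
search for a `g`-preimage of `f x` factors `f` as `g ∘ h` with `h` computable, and `h` is a
reduction for every `U`. In general let `e` enumerate the finite set `range f \ range g`. Then
`range f` is contained in the range of `Sum.elim g e`, and `U` pulls back along this map to the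
disjoint union of `g⁻¹(U)` and `e⁻¹(U)`. The latter is decidable, hence reduces to the nontrivial
set `g⁻¹(U)`.
-/

section Reductions

open Set

variable {α β γ σ : Type*} [Primcodable α] [Primcodable β] [Primcodable γ] [Primcodable σ]

theorem exists_computable_comp_eq_of_range_subset {f : α → σ} {g : β → σ} (hf : Computable f)
    (hg : Computable g) (hfg : range f ⊆ range g) : ∃ h : α → β, Computable h ∧ g ∘ h = f := by
  classical
  let codesPreimage (a : α) (n : ℕ) : Prop := (Encodable.decode (α := β) n).map g = some (f a)
  have codesPreimage_computable : ComputablePred fun p : α × ℕ ↦ codesPreimage p.1 p.2 :=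
    (Primrec.eq.decide.to_comp.comp
      (Computable.option_map (Computable.decode.comp .snd) (hg.comp .snd).to₂)
      (Computable.option_some.comp (hf.comp .fst))).computablePred
  have exists_code (a : α) : ∃ n, codesPreimage a n := by
    obtain ⟨b, hb⟩ := hfg (mem_range_self a)
    exact ⟨Encodable.encode b, by simp [codesPreimage, hb]⟩
  choose h decode_h g_h using fun a ↦ Option.map_eq_some_iff.1 (Nat.find_spec (exists_code a))
  have find_computable := Computable.find codesPreimage_computable exists_code
  have h_computable : Computable h :=
    (Computable.decode.comp find_computable).ofOption.of_eq_tot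
      fun a ↦ Part.mem_ofOption.2 (decode_h a)
  exact ⟨h, h_computable, funext g_h⟩

theorem manyOneReducible_of_computablePred {p : α → Prop} {q : β → Prop} (hp : ComputablePred p)
    (hq : ∃ b, q b) (hq' : ∃ b, ¬q b) : p ≤₀ q := by
  classical
  obtain ⟨b, hb⟩ := hq
  obtain ⟨b', hb'⟩ := hq'
  refine ⟨fun a ↦ bif decide (p a) then b else b', hp.decide.cond (.const b) (.const b'),
    fun a ↦ ?_⟩
  by_cases ha : p a <;> simp [ha, hb, hb']

theorem computablePred_of_finite [Finite α] (p : α → Prop) : ComputablePred p := by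
  classical
  exact (Primrec.dom_finite fun a ↦ decide (p a)).to_comp.computablePred

theorem computable_sumElim {g : β → σ} {e : γ → σ} (hg : Computable g) (he : Computable e) :
    Computable (Sum.elim g e) :=
  (Computable.id.sumCasesOn (hg.comp .snd).to₂ (he.comp .snd).to₂).of_eq <| by
    rintro (_ | _) <;> rfl

theorem preimage_manyOneReducible_of_range_subset {f : α → σ} {g : β → σ} (hf : Computable f)
    (hg : Computable g) (hfg : range f ⊆ range g) (U : Set σ) :
    (fun a ↦ f a ∈ U) ≤₀ (fun b ↦ g b ∈ U) := by
  obtain ⟨h, hh, rfl⟩ := exists_computable_comp_eq_of_range_subset hf hg hfg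
  exact .mk (fun b ↦ g b ∈ U) hh

theorem preimage_manyOneReducible_of_range_subset_union {f : α → σ} {g : β → σ} {e : γ → σ}
    {U : Set σ} (hf : Computable f) (hg : Computable g) (he : Computable e)
    (hfge : range f ⊆ range g ∪ range e) (heg : (fun c ↦ e c ∈ U) ≤₀ (fun b ↦ g b ∈ U)) :
    (fun a ↦ f a ∈ U) ≤₀ (fun b ↦ g b ∈ U) := by
  rw [← Sum.elim_range] at hfge
  have sum_le : (fun s ↦ Sum.elim g e s ∈ U) ≤₀ (fun b ↦ g b ∈ U) := by
    convert disjoin_manyOneReducible (manyOneReducible_refl fun b ↦ g b ∈ U) heg using 1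
    exact Sum.comp_elim (· ∈ U) g e
  have le_sum := preimage_manyOneReducible_of_range_subset hf (computable_sumElim hg he) hfge U
  exact le_sum.trans sum_le

theorem preimage_manyOneReducible_of_range_sdiff_finite {f : α → σ} {g : β → σ} {U : Set σ}
    (hf : Computable f) (hg : Computable g) (hfin : (range f \ range g).Finite)
    (hU : (range g ∩ U).Nonempty) (hU' : (range g \ U).Nonempty) :
    (fun a ↦ f a ∈ U) ≤₀ (fun b ↦ g b ∈ U) := by
  obtain ⟨n, e, he⟩ := hfin.fin_embedding
  have range_subset : range f ⊆ range g ∪ range e := by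
    rw [he, union_sdiff_self]
    exact subset_union_right
  have e_le : (fun i ↦ e i ∈ U) ≤₀ (fun b ↦ g b ∈ U) := by
    obtain ⟨_, ⟨b, rfl⟩, hb⟩ := hU
    obtain ⟨_, ⟨b', rfl⟩, hb'⟩ := hU'
    exact manyOneReducible_of_computablePred (computablePred_of_finite _) ⟨b, hb⟩ ⟨b', hb'⟩
  exact preimage_manyOneReducible_of_range_subset_union hf hg (Primrec.dom_finite e).to_comp
    range_subset e_le

theorem preimage_manyOneEquiv_of_range_symmDiff_finite_general {f : α → σ} {g : β → σ}
    {U : Set σ} (hf : Computable f) (hg : Computable g)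
    (hfin : (symmDiff (range f) (range g)).Finite)
    (hfU : (range f ∩ U).Nonempty) (hfU' : (range f \ U).Nonempty)
    (hgU : (range g ∩ U).Nonempty) (hgU' : (range g \ U).Nonempty) :
    ManyOneEquiv (fun a ↦ f a ∈ U) (fun b ↦ g b ∈ U) :=
  ⟨preimage_manyOneReducible_of_range_sdiff_finite hf hg (hfin.subset subset_union_left) hgU hgU',
    preimage_manyOneReducible_of_range_sdiff_finite hg hf (hfin.subset subset_union_right) hfU hfU'⟩

end Reductions

/-- If `f` and `g` are total computable functions whose ranges differ only by a
finite set, and the sets `range f ∩ U`, `range f \ U`, `range g ∩ U`, `range g \ U`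
are all nonempty, then `f⁻¹(U)` and `g⁻¹(U)` are many-one equivalent. -/
theorem preimage_manyOneEquiv_of_range_symmDiff_finite
    (U : Set ℕ) (f g : ℕ → ℕ) (hf : Computable f) (hg : Computable g)
    (hfin : ((Set.range f \ Set.range g) ∪ (Set.range g \ Set.range f)).Finite)
    (h1 : (Set.range f ∩ U).Nonempty) (h2 : (Set.range f \ U).Nonempty)
    (h3 : (Set.range g ∩ U).Nonempty) (h4 : (Set.range g \ U).Nonempty) :
    ManyOneEquiv (fun x : ℕ => f x ∈ U) (fun x : ℕ => g x ∈ U) :=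
  preimage_manyOneEquiv_of_range_symmDiff_finite_general hf hg hfin h1 h2 h3 h4
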